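/- Let p be a prime and let A = {a_1, …, a_n} ⊆ GF(p) be a set of n ≥ 2 distinct elements with n² < p. Then the point set U = {(a_i + a_j², a_j) : 1 ≤ i, j ≤ n} ⊆ AG(2,p) determines at least n² − n + 1 directions. -/

import Mathlib

/-!
The proof is the lacunary-polynomial method of Rédei and Szőnyi. Index the points of `U` by
`A × A` and let `H(X, Y) = ∏ (X - (v - Y u))`, the product being over the points `(u, v)` of `U`.
Divide `X ^ p` by `H` as polynomials in `X` over `GF(p)[Y]`, with remainder `r`. As `H` has total
degree `n ^ 2`, the coefficient of `X ^ k` in `r` has degree at most `p - k` in `Y`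
(`exists_weighted_division`). If `d` is a slope that `U` does not determine, the `n ^ 2` roots
of `H(X, d)` are distinct; at each of them `r(X, d)` agrees with `X ^ p`, hence with `X`, so
`r(X, d) = X`. If `N` is the number of finite slopes determined, the coefficient of `X ^ k` in `r`
with `k ≥ 2` therefore has `p - N` zeros, and vanishes as soon as `k > N` (`exists_lacunary`).

Now put `Y = 0`. Every line `y = b` with `b ∈ A` carries `n` points of `U`, so
`X ^ p - r(X, 0)` is divisible by `∏ (X - b) ^ n`, and its derivative, which is `-r(X, 0)'`, is
divisible by `∏ (X - b) ^ (n - 1)`. If `r(X, 0)' ≠ 0`, comparing degrees gives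
`n ^ 2 - n ≤ N - 1`. If `r(X, 0)' = 0`, then `r(X, 0)` is constant because its degree is below
`p`; but it takes the value `b ^ p = b` at each `b ∈ A`, which contradicts `|A| ≥ 2`.
-/

/-- The set of directions (elements of `GF(p) ∪ {∞}`, encoded as `Option (ZMod p)`
with `none = ∞`) determined by a point set `U ⊆ AG(2,p) = (ZMod p)²`. -/
def dirSet (p : ℕ) (U : Set (ZMod p × ZMod p)) : Set (Option (ZMod p)) :=
  {d | ∃ P ∈ U, ∃ Q ∈ U, P ≠ Q ∧
    ((P.1 = Q.1 ∧ d = none) ∨ (P.1 ≠ Q.1 ∧ d = some ((P.2 - Q.2) * (P.1 - Q.1)⁻¹)))}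

open Polynomial in
/-- `P ∈ F[Y][X]` has total degree at most `k`. The degree of the zero coefficient is `⊥`, so
vanishing coefficients impose no condition, and `P.coeff j = 0` for `j > k`. -/
def TotalDegLE {F : Type*} [Field F] (k : ℕ) (P : F[X][X]) : Prop :=
  ∀ j : ℕ, (P.coeff j).degree + (j : WithBot ℕ) ≤ (k : WithBot ℕ)

open Polynomial in
lemma TotalDegLE.mul {F : Type*} [Field F] {k l : ℕ} {P Q : F[X][X]}
    (hP : TotalDegLE k P) (hQ : TotalDegLE l Q) : TotalDegLE (k + l) (P * Q) := by
  intro j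
  rw [coeff_mul]
  by_contra! h
  have key : ∀ x ∈ Finset.HasAntidiagonal.antidiagonal j,
      (P.coeff x.1 * Q.coeff x.2).degree + (j : WithBot ℕ) ≤ ((k + l : ℕ) : WithBot ℕ) := by
    intro x hx
    rw [Finset.HasAntidiagonal.mem_antidiagonal] at hx
    rw [degree_mul, ← hx]
    have := add_le_add (hP x.1) (hQ x.2)
    push_cast
    calc _ = (P.coeff x.1).degree + (x.1 : WithBot ℕ) + ((Q.coeff x.2).degree + x.2) := by abel
      _ ≤ _ := this
  have hne : (Finset.HasAntidiagonal.antidiagonal j).Nonempty := ⟨(0, j), by simp⟩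
  obtain ⟨x, hx, hx'⟩ := Finset.exists_mem_eq_sup _ hne
    (fun x => (P.coeff x.1 * Q.coeff x.2).degree)
  have h1 := degree_sum_le (Finset.HasAntidiagonal.antidiagonal j) (fun x => P.coeff x.1 * Q.coeff x.2)
  rw [hx'] at h1
  exact absurd (lt_of_lt_of_le h (add_le_add_left h1 _)) (not_lt.2 (key x hx))

open Polynomial in
lemma TotalDegLE.sub {F : Type*} [Field F] {k : ℕ} {P Q : F[X][X]}
    (hP : TotalDegLE k P) (hQ : TotalDegLE k Q) : TotalDegLE k (P - Q) := by
  intro j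
  rw [coeff_sub]
  rcases le_max_iff.1 (degree_sub_le (P.coeff j) (Q.coeff j)) with h | h
  · exact (add_le_add_left h _).trans (hP j)
  · exact (add_le_add_left h _).trans (hQ j)

open Polynomial in
lemma totalDegLE_X {F : Type*} [Field F] : TotalDegLE 1 (X : F[X][X]) := by
  intro j
  rw [coeff_X]
  split_ifs with h
  · subst h; simp
  · simp

open Polynomial in
lemma totalDegLE_C {F : Type*} [Field F] {k : ℕ} {c : F[X]} (hc : c.degree ≤ k) :
    TotalDegLE k (C c) := by
  intro j
  rw [coeff_C]
  split_ifs with h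
  · subst h; simpa using hc
  · simp

open Polynomial in
lemma totalDegLE_prod {F ι : Type*} [Field F] (s : Finset ι) (f : ι → F[X][X])
    (h : ∀ i ∈ s, TotalDegLE 1 (f i)) : TotalDegLE s.card (∏ i ∈ s, f i) := by
  classical
  induction s using Finset.induction_on with
  | empty =>
    simp only [Finset.prod_empty, Finset.card_empty]
    rw [← C_1]
    exact totalDegLE_C (by simp)
  | insert a s ha ih =>
    rw [Finset.prod_insert ha, Finset.card_insert_of_notMem ha, add_comm]
    exact (h a (by simp)).mul (ih fun i hi => h i (by simp [hi]))

open Polynomial in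
/-- Division of `X ^ k` by a monic `H ∈ F[Y][X]` whose total degree equals its degree in `X`:
the remainder has total degree at most `k`. -/
lemma exists_weighted_division {F : Type*} [Field F] {m : ℕ} (hm : 1 < m) {H : F[X][X]}
    (hH : H.Monic) (hdeg : H.natDegree = m) (hW : TotalDegLE m H) (k : ℕ) :
    ∃ q r : F[X][X], X ^ k = H * q + r ∧ r.degree < m ∧ TotalDegLE k r := by
  induction k with
  | zero =>
    refine ⟨0, 1, by simp, by rw [degree_one]; exact_mod_cast (by omega), ?_⟩
    rw [← C_1]
    exact totalDegLE_C (by simp)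
  | succ k ih =>
    obtain ⟨q, r, h1, h2, h3⟩ := ih
    set c := r.coeff (m - 1) with hc
    refine ⟨X * q + C c, r * X - C c * H, ?_, ?_, ?_⟩
    · rw [pow_succ, h1]; ring
    · rw [degree_lt_iff_coeff_zero] at h2 ⊢
      intro j hj
      obtain ⟨j, rfl⟩ : ∃ i, j = i + 1 := ⟨j - 1, by omega⟩
      rw [coeff_sub, coeff_mul_X, coeff_C_mul]
      rcases Nat.lt_or_ge m (j + 1) with h | h
      · rw [h2 j (by omega), coeff_eq_zero_of_natDegree_lt (hdeg.trans_lt h)]; simp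
      · have e : j + 1 = H.natDegree := hdeg ▸ le_antisymm h hj
        rw [e, hH.coeff_natDegree, hc, mul_one, show m - 1 = j by rw [hdeg] at e; omega, sub_self]
    · refine (h3.mul totalDegLE_X).sub ?_
      intro j
      rw [coeff_C_mul, degree_mul]
      have e1 := h3 (m - 1)
      have e2 := hW j
      rw [← hc] at e1
      generalize c.degree = x at *
      generalize (H.coeff j).degree = y at *
      induction x with
      | bot => simp
      | coe x =>
        induction y with
        | bot => simp
        | coe y =>
          have e1' : x + (m - 1) ≤ k := WithBot.coe_le_coe.1 e1
          have e2' : y + j ≤ m := WithBot.coe_le_coe.1 e2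
          exact WithBot.coe_le_coe.2 (show x + y + j ≤ k + 1 by omega)

open Polynomial in
/-- The lacunary polynomial of Rédei and Szőnyi: outside a set `D` of slopes, the points
`(u i, v i)` lie on distinct lines of slope `d`. The polynomial `r` is the remainder of `X ^ p`
modulo the product over the points, specialised at slope `0`. -/
lemma exists_lacunary {ι : Type*} {p : ℕ} [Fact p.Prime] (s : Finset ι) (hs : 1 < s.card)
    (u v : ι → ZMod p) (D : Finset (ZMod p))
    (hD : ∀ d ∉ D, Set.InjOn (fun i => v i - d * u i) s) :
    ∃ q r : (ZMod p)[X], X ^ p = (∏ i ∈ s, (X - C (v i))) * q + r ∧ r.degree < s.card ∧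
      ∀ k, 2 ≤ k → D.card < k → r.coeff k = 0 := by
  set f : ι → (ZMod p)[X][X] := fun i => X - C (C (v i) - X * C (u i)) with hf
  have hmon : (∏ i ∈ s, f i).Monic := monic_prod_of_monic _ _ fun i _ => monic_X_sub_C _
  have hdeg : (∏ i ∈ s, f i).natDegree = s.card := by
    rw [natDegree_prod_of_monic _ _ fun i _ => monic_X_sub_C _]
    simp only [hf, natDegree_X_sub_C, Finset.sum_const, smul_eq_mul, mul_one]
  have hW : TotalDegLE s.card (∏ i ∈ s, f i) := by
    refine totalDegLE_prod s f fun i _ => totalDegLE_X.sub (totalDegLE_C ?_)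
    compute_degree
    exact le_rfl
  obtain ⟨Q, R, h1, h2, h3⟩ := exists_weighted_division hs hmon hdeg hW p
  have hspec : ∀ d : ZMod p, (X : (ZMod p)[X]) ^ p =
      (∏ i ∈ s, (X - C (v i - d * u i))) * Q.map (evalRingHom d) + R.map (evalRingHom d) := by
    intro d
    have := congrArg (Polynomial.map (evalRingHom d)) h1
    rw [Polynomial.map_add, Polynomial.map_mul, Polynomial.map_pow, map_X,
      Polynomial.map_prod] at this
    rw [this]
    congr 2
    refine Finset.prod_congr rfl fun i _ => ?_
    rw [hf, Polynomial.map_sub, map_X, map_C]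
    simp [mul_comm (C d)]
  have hRdeg : ∀ d : ZMod p, (R.map (evalRingHom d)).degree < s.card := fun d =>
    degree_map_le.trans_lt h2
  have hgood : ∀ d ∉ D, R.map (evalRingHom d) = X := by
    intro d hd
    rw [← sub_eq_zero]
    refine eq_zero_of_degree_lt_of_eval_index_eq_zero s (hD d hd) ?_ ?_
    · refine (degree_sub_le _ _).trans_lt (max_lt (hRdeg d) ?_)
      rw [degree_X]; exact_mod_cast hs
    · intro i hi
      have h := congrArg (eval (v i - d * u i)) (hspec d)
      rw [eval_add, eval_mul, eval_prod, Finset.prod_eq_zero hi (by simp)] at h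
      simp only [eval_pow, eval_X, ZMod.pow_card, zero_mul, zero_add] at h
      rw [eval_sub, ← h, eval_X, sub_self]
  refine ⟨_, _, by simpa using hspec 0, hRdeg 0, fun k hk2 hk => ?_⟩
  have hz : R.coeff k = 0 := by
    refine eq_zero_of_degree_lt_of_eval_finset_eq_zero Dᶜ ?_ ?_
    · have e := h3 k
      rw [Finset.card_compl, ZMod.card]
      have hDp : D.card ≤ p := by simpa [ZMod.card] using Finset.card_le_univ D
      generalize (R.coeff k).degree = x at *
      induction x with
      | bot => exact WithBot.bot_lt_coe _
      | coe x =>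
        have e' : x + k ≤ p := WithBot.coe_le_coe.1 e
        exact WithBot.coe_lt_coe.2 (show x < p - D.card by omega)
    · intro d hd
      have := congrArg (fun P => coeff P k) (hgood d (Finset.mem_compl.1 hd))
      simpa [coeff_X, show (1 : ℕ) ≠ k by omega] using this
  rw [coeff_map, hz, map_zero]

open Polynomial in
/-- For `A ⊆ GF(p)` with `|A| = n ≥ 2` and `n² < p`, the point set
`{(a + a'², a') : a, a' ∈ A}` determines at least `n² - n + 1` directions. -/
theorem directions_of_parabola_shifted_grid (p n : ℕ) (hp : p.Prime)
    (A : Finset (ZMod p)) (hcard : A.card = n) (hn : 2 ≤ n) (hn2 : n ^ 2 < p) :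
    n ^ 2 - n + 1 ≤
      (dirSet p {P : ZMod p × ZMod p | ∃ a ∈ A, ∃ a' ∈ A, P = (a + a' ^ 2, a')}).ncard := by
  classical
  have : Fact p.Prime := ⟨hp⟩
  set S := dirSet p {P : ZMod p × ZMod p | ∃ a ∈ A, ∃ a' ∈ A, P = (a + a' ^ 2, a')} with hS
  set D : Finset (ZMod p) := Finset.univ.filter fun d => some d ∈ S with hDdef
  have hDS : D.card ≤ S.ncard := by
    rw [← Finset.card_image_of_injective D (Option.some_injective _), ← Set.ncard_coe_finset]
    refine Set.ncard_le_ncard ?_ (Set.toFinite _)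
    intro x hx
    obtain ⟨d, hd, rfl⟩ := Finset.mem_image.1 (Finset.mem_coe.1 hx)
    exact (Finset.mem_filter.1 hd).2
  refine le_trans ?_ hDS
  have hsc : (A ×ˢ A).card = n ^ 2 := by rw [Finset.card_product, hcard, sq]
  have hnn : n + 2 ≤ n ^ 2 := by nlinarith
  obtain ⟨q, r, h1, h2, h3⟩ := exists_lacunary (A ×ˢ A) (by omega)
    (fun i => i.1 + i.2 ^ 2) (fun i => i.2) D (by
      rintro d hd ⟨a, b⟩ hi ⟨a', b'⟩ hj hij
      simp only [Finset.coe_product, Set.mem_prod, Finset.mem_coe] at hi hj hij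
      by_contra hne
      apply hd
      rw [hDdef, Finset.mem_filter]
      have hu : a + b ^ 2 ≠ a' + b' ^ 2 := by
        intro hu
        rw [hu] at hij
        have hb : b = b' := sub_left_injective hij
        subst hb
        exact hne (by rw [add_right_cancel hu])
      refine ⟨Finset.mem_univ _, (a + b ^ 2, b), ⟨a, hi.1, b, hi.2, rfl⟩,
        (a' + b' ^ 2, b'), ⟨a', hj.1, b', hj.2, rfl⟩, ?_, Or.inr ⟨hu, ?_⟩⟩
      · intro h
        exact hu (congrArg Prod.fst h)
      · rw [Option.some_inj, eq_mul_inv_iff_mul_eq₀ (sub_ne_zero.2 hu)]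
        linear_combination -hij)
  have hprod : (∏ i ∈ A ×ˢ A, (X - C i.2) : (ZMod p)[X]) = (∏ b ∈ A, (X - C b)) ^ n := by
    rw [Finset.prod_product]
    simp [hcard]
  simp only [hprod] at h1
  set G : (ZMod p)[X] := ∏ b ∈ A, (X - C b) with hG
  have hGdeg : G.natDegree = n := by
    rw [hG, natDegree_prod_of_monic _ _ fun i _ => monic_X_sub_C _]
    simp [hcard]
  have hdvd : G ^ (n - 1) ∣ derivative r := by
    have hd := congrArg derivative h1
    obtain ⟨k, rfl⟩ : ∃ k, n = k + 1 := ⟨n - 1, by omega⟩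
    simp only [derivative_X_pow, CharP.cast_eq_zero, map_zero, zero_mul, derivative_add,
      derivative_mul, derivative_pow_succ] at hd
    rw [add_tsub_cancel_right]
    refine ⟨-((k + 1 : (ZMod p)[X]) * derivative G * q + G * derivative q), ?_⟩
    simp only [map_add, map_one, map_natCast] at hd
    linear_combination -hd
  have hr0 : derivative r ≠ 0 := by
    intro h0
    -- The degree of `r` is below `p`, so no factor `k` in `k * r.coeff k = 0` is a zero of `GF(p)`.
    have hco : ∀ k, 1 ≤ k → r.coeff k = 0 := by
      intro k hk
      rcases Nat.lt_or_ge k p with hkp | hkp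
      · have h := congrArg (fun P => coeff P (k - 1)) h0
        simp only [coeff_derivative, coeff_zero, Nat.sub_add_cancel hk] at h
        rcases mul_eq_zero.1 h with h | h
        · exact h
        · have h' : ((k : ℕ) : ZMod p) = 0 := by
            rw [← h]
            conv_lhs => rw [← Nat.sub_add_cancel hk]
            push_cast
            rfl
          rw [ZMod.natCast_eq_zero_iff] at h'
          exact absurd (Nat.le_of_dvd hk h') (by omega)
      · exact (degree_lt_iff_coeff_zero _ _).1 h2 k (by omega)
    have hrC : r = C (r.coeff 0) := by
      ext k
      rcases Nat.eq_zero_or_pos k with rfl | hk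
      · simp
      · rw [hco k hk, coeff_C, if_neg (by omega)]
    have hval : ∀ b ∈ A, b = r.coeff 0 := by
      intro b hb
      have h := congrArg (eval b) h1
      have hGb : eval b G = 0 := by
        rw [hG, eval_prod]
        exact Finset.prod_eq_zero hb (by simp)
      rw [hrC] at h
      simpa [hGb, ZMod.pow_card, show n ≠ 0 by omega] using h
    obtain ⟨a, ha, b, hb, hab⟩ := Finset.one_lt_card.1 (show 1 < A.card by omega)
    exact hab ((hval a ha).trans (hval b hb).symm)
  have hle := natDegree_le_of_dvd hdvd hr0
  rw [natDegree_pow, hGdeg] at hle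
  -- The bound on the coefficients of `r` is void for `k ≤ 1`, whence the maximum.
  have hrd : r.natDegree ≤ max D.card 1 := by
    rw [natDegree_le_iff_coeff_eq_zero]
    intro k hk
    have := max_lt_iff.1 hk
    exact h3 k (by omega) this.1
  have hdd := natDegree_derivative_le r
  have hmul : (n - 1) * n = n ^ 2 - n := by rw [Nat.sub_mul, one_mul, sq]
  rw [hmul] at hle
  rcases le_total D.card 1 with h | h
  · rw [max_eq_right h] at hrd; omega
  · rw [max_eq_left h] at hrd; omega
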